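/- arXiv:1708.05520 — 3 statements merged into one kernel-verified Lean document; each statement's English description precedes it below -/
import Mathlib

section
/- Gale–Ryser theorem: Let r : Fin n₁ → ℕ be a non-increasing integer vector and c : Fin n₂ → ℕ an integer vector. The pair (r, c) is bi-graphical if and only if S_{n₁}(r) = S_{n₂}(c) and r is dominated by the conjugate vector c', i.e. S_k(r) ≤ S_k(c') for all k = 1, …, n₁. -/
open Finset

/-- Degree of row vertex `i` in a bipartite graph given by biadjacency matrix `M`. -/
def degU {n₁ n₂ : ℕ} (M : Fin n₁ → Fin n₂ → Bool) (i : Fin n₁) : ℕ :=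
  (univ.filter fun j => M i j = true).card

/-- Degree of column vertex `j` in a bipartite graph given by biadjacency matrix `M`. -/
def degV {n₁ n₂ : ℕ} (M : Fin n₁ → Fin n₂ → Bool) (j : Fin n₂) : ℕ :=
  (univ.filter fun i => M i j = true).card

/-- `psum x k` = sum of the first `k` components of the vector `x`. -/
def psum {n : ℕ} (x : Fin n → ℕ) (k : ℕ) : ℕ :=
  ∑ i ∈ univ.filter (fun i : Fin n => (i : ℕ) < k), x i

/-- `conj x i` = the `i`-th component (1-based) of the conjugate vector of `x`:
the number of indices `j` with `x j ≥ i`. -/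
def conj {m : ℕ} (x : Fin m → ℕ) (i : ℕ) : ℕ :=
  (univ.filter fun j : Fin m => i ≤ x j).card

/-- The conjugate vector of `x`, taken with length `n`. -/
def conjVec (n : ℕ) {m : ℕ} (x : Fin m → ℕ) : Fin n → ℕ :=
  fun i => conj x ((i : ℕ) + 1)

/-- A pair `(r, c)` is bi-graphical if some biadjacency matrix realizes these
degrees exactly. -/
def BiGraphical {n₁ n₂ : ℕ} (r : Fin n₁ → ℕ) (c : Fin n₂ → ℕ) : Prop :=
  ∃ M : Fin n₁ → Fin n₂ → Bool, (∀ i, degU M i = r i) ∧ (∀ j, degV M j = c j)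

/-- `M` is a realization of the four-tuple `(rl, ru, cl, cu)`. -/
def IsRealization {n₁ n₂ : ℕ} (rl ru : Fin n₁ → ℕ) (cl cu : Fin n₂ → ℕ)
    (M : Fin n₁ → Fin n₂ → Bool) : Prop :=
  (∀ i, rl i ≤ degU M i ∧ degU M i ≤ ru i) ∧ (∀ j, cl j ≤ degV M j ∧ degV M j ≤ cu j)

/-- The four-tuple `(rl, ru, cl, cu)` is realizable. -/
def Realizable {n₁ n₂ : ℕ} (rl ru : Fin n₁ → ℕ) (cl cu : Fin n₂ → ℕ) : Prop :=
  ∃ M, IsRealization rl ru cl cu M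

/-- The number of edges of the bipartite graph given by `M`. -/
def edges {n₁ n₂ : ℕ} (M : Fin n₁ → Fin n₂ → Bool) : ℕ :=
  (univ.filter fun p : Fin n₁ × Fin n₂ => M p.1 p.2 = true).card

/-- `max (0, δ₁)` where `δ₁ = max over 1 ≤ j ≤ n₁ of (S_j(rl) - S_j(cl'))`
computed in the integers, `cl'` being the conjugate of `cl` of length `n₁`. -/
def delta1 {n₁ n₂ : ℕ} (rl : Fin n₁ → ℕ) (cl : Fin n₂ → ℕ) : ℕ :=
  (Finset.Icc 1 n₁).sup fun j =>
    ((psum rl j : ℤ) - (psum (conjVec n₁ cl) j : ℤ)).toNat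

theorem exists_top {n : ℕ} (c : Fin n → ℕ) (m : ℕ) (hm : m ≤ n) :
    ∃ T : Finset (Fin n), T.card = m ∧ ∀ a ∈ T, ∀ b, b ∉ T → c b ≤ c a := by
  induction m with
  | zero => exact ⟨∅, by simp, by simp⟩
  | succ m ih =>
    obtain ⟨T, hT, h⟩ := ih (by omega)
    have hne : (Tᶜ).Nonempty := by
      rw [← Finset.card_pos, Finset.card_compl, Fintype.card_fin]; omega
    obtain ⟨x, hx, hmax⟩ := Finset.exists_max_image Tᶜ c hne
    rw [Finset.mem_compl] at hx
    refine ⟨insert x T, by rw [Finset.card_insert_of_notMem hx, hT], ?_⟩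
    intro a ha b hb
    rw [Finset.mem_insert, not_or] at hb
    rcases Finset.mem_insert.1 ha with rfl | ha
    · exact hmax b (Finset.mem_compl.2 hb.2)
    · exact h a ha b hb.2

theorem exists_matrix {m : ℕ} : ∀ {n : ℕ} (r : Fin n → ℕ) (c : Fin m → ℕ)
    (_ : ∑ i, r i = ∑ j, c j)
    (_ : ∀ I : Finset (Fin n), ∑ i ∈ I, r i ≤ ∑ j, min (c j) I.card), BiGraphical r c := by
  intro n
  induction n with
  | zero =>
    intro r c hs _
    refine ⟨fun i _ => i.elim0, fun i => i.elim0, fun j => ?_⟩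
    simp only [univ_eq_empty, sum_empty] at hs
    have : c j = 0 := (Finset.sum_eq_zero_iff.1 hs.symm) j (mem_univ j)
    simp [degV, this]
  | succ n ih =>
    intro r c hs H
    have h0 : r 0 ≤ (univ.filter fun j => 1 ≤ c j).card := by
      have := H {0}
      rw [Finset.sum_singleton, Finset.card_singleton] at this
      rw [Finset.card_filter]
      refine this.trans (Finset.sum_le_sum fun j _ => ?_)
      split_ifs <;> omega
    obtain ⟨T, hT, htop⟩ := exists_top c (r 0)
      (h0.trans ((Finset.card_le_univ _).trans (by simp)))
    have hpos : ∀ t ∈ T, 1 ≤ c t := by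
      intro t ht
      by_contra hc
      have hsub : (univ.filter fun j => 1 ≤ c j) ⊂ T := by
        rw [Finset.ssubset_iff_of_subset]
        · exact ⟨t, ht, by simpa using hc⟩
        · intro j hj
          by_contra hjT
          have := htop t ht j hjT
          simp at hj
          omega
      have := Finset.card_lt_card hsub
      omega
    have hTs : T.card = ∑ j, (if j ∈ T then 1 else 0) := by simp
    obtain ⟨M, hU, hV⟩ := ih (fun i => r i.succ) (fun j => c j - if j ∈ T then 1 else 0)
      (by
        rw [Fin.sum_univ_succ] at hs
        have : ∑ j, (c j - if j ∈ T then 1 else 0) + ∑ j, (if j ∈ T then 1 else 0) = ∑ j, c j := by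
          rw [← Finset.sum_add_distrib]
          refine Finset.sum_congr rfl fun j _ => ?_
          split_ifs with h
          · have := hpos j h; omega
          · omega
        omega)
      (by
        intro I
        by_cases hall : ∀ t ∈ T, I.card < c t
        · have := H (I.map (Fin.succEmb n))
          rw [Finset.sum_map, Finset.card_map] at this
          refine this.trans (Finset.sum_le_sum fun j _ => ?_)
          split_ifs with h
          · have := hall j h; omega
          · omega
        · push Not at hall
          obtain ⟨t, ht, hct⟩ := hall
          have := H (insert 0 (I.map (Fin.succEmb n)))
          have hn : (0 : Fin (n+1)) ∉ I.map (Fin.succEmb n) := by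
            simp [Fin.succ_ne_zero]
          rw [Finset.sum_insert hn, Finset.card_insert_of_notMem hn, Finset.sum_map,
            Finset.card_map] at this
          have h2 : ∑ j, min (c j) (I.card + 1) ≤
              ∑ j, min (c j - if j ∈ T then 1 else 0) I.card + ∑ j, (if j ∈ T then 1 else 0) := by
            rw [← Finset.sum_add_distrib]
            refine Finset.sum_le_sum fun j _ => ?_
            split_ifs with h
            · omega
            · have := htop t ht j h; omega
          simp only [Fin.coe_succEmb] at this
          omega)
    refine ⟨Fin.cons (fun j => decide (j ∈ T)) M, ?_, ?_⟩
    · intro i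
      refine Fin.cases ?_ (fun i => ?_) i
      · simp [degU, hT]
      · simpa [degU] using hU i
    · intro j
      have := hV j
      simp only [degV, Finset.card_filter] at this ⊢
      rw [Fin.sum_univ_succ]
      simp only [Fin.cons_zero, Fin.cons_succ, this, decide_eq_true_eq]
      split_ifs with h
      · have := hpos j h; omega
      · omega

theorem card_lt_lt (n a k : ℕ) (hk : k ≤ n) :
    (univ.filter fun i : Fin n => (i : ℕ) < k ∧ (i : ℕ) < a).card = min a k := by
  have : (univ.filter fun i : Fin n => (i : ℕ) < k ∧ (i : ℕ) < a).map Fin.valEmbedding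
      = Finset.range (min a k) := by
    ext x
    simp only [mem_map, mem_filter, mem_univ, true_and, Fin.valEmbedding_apply, mem_range]
    constructor
    · rintro ⟨i, hi, rfl⟩; omega
    · intro hx; exact ⟨⟨x, by omega⟩, by simp; omega, rfl⟩
  rw [← Finset.card_map, this, Finset.card_range]

theorem psum_conj {n m : ℕ} (c : Fin m → ℕ) (k : ℕ) (hk : k ≤ n) :
    psum (conjVec n c) k = ∑ j, min (c j) k := by
  simp only [psum, conjVec, conj, Finset.card_filter]
  rw [Finset.sum_comm]
  refine Finset.sum_congr rfl fun j _ => ?_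
  rw [← Finset.card_filter, Finset.filter_filter, ← card_lt_lt n (c j) k hk]
  rfl

theorem psum_all {n : ℕ} (x : Fin n → ℕ) : psum x n = ∑ i, x i := by
  simp [psum]

theorem sum_le_psum {n : ℕ} (r : Fin n → ℕ) (hr : Antitone r) (I : Finset (Fin n)) :
    ∑ i ∈ I, r i ≤ psum r I.card := by
  induction I using Finset.induction_on_max with
  | empty => simp
  | insert a s hs ih =>
    have hn : a ∉ s := fun h => lt_irrefl _ (hs a h)
    rw [Finset.sum_insert hn, Finset.card_insert_of_notMem hn]
    have hcard : s.card ≤ (a : ℕ) := by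
      have := Finset.card_le_card (show s ⊆ Finset.Iio a from fun x hx => Finset.mem_Iio.2 (hs x hx))
      simpa using this
    have hlt : s.card < n := lt_of_le_of_lt hcard a.2
    have hstep : psum r (s.card + 1) = r ⟨s.card, hlt⟩ + psum r s.card := by
      unfold psum
      rw [← Finset.sum_insert (by simp)]
      refine Finset.sum_congr ?_ fun _ _ => rfl
      ext i
      simp [Fin.ext_iff]
      omega
    rw [hstep]
    exact add_le_add (hr (by simpa [Fin.le_def] using hcard)) ih

/-- Gale–Ryser theorem. -/
theorem gale_ryser {n₁ n₂ : ℕ} (r : Fin n₁ → ℕ) (c : Fin n₂ → ℕ)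
    (hr : Antitone r) :
    BiGraphical r c ↔
      psum r n₁ = psum c n₂ ∧
        ∀ k, 1 ≤ k → k ≤ n₁ → psum r k ≤ psum (conjVec n₁ c) k := by
  constructor
  · rintro ⟨M, hU, hV⟩
    constructor
    · rw [psum_all, psum_all]
      simp only [← hU, ← hV, degU, degV, Finset.card_filter]
      exact Finset.sum_comm
    · intro k _ hk
      rw [psum_conj c k hk]
      simp only [psum, ← hU, degU, Finset.card_filter]
      rw [Finset.sum_comm]
      refine Finset.sum_le_sum fun j _ => ?_
      rw [← Finset.card_filter, ← hV j, degV]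
      refine le_min (Finset.card_le_card ?_) ?_
      · intro i; simp
      · refine (Finset.card_le_card (Finset.filter_subset _ _)).trans ?_
        have := card_lt_lt n₁ k k hk
        simp only [and_self, min_self] at this
        exact this.le
  · rintro ⟨hs, H⟩
    rw [psum_all, psum_all] at hs
    refine exists_matrix r c hs fun I => (sum_le_psum r hr I).trans ?_
    have hI : I.card ≤ n₁ := by simpa using Finset.card_le_univ I
    rw [← psum_conj c I.card hI]
    rcases Nat.eq_zero_or_pos I.card with h | h
    · rw [h]; simp [psum]
    · exact H _ h hI
end

section
/- Let r̲ : Fin n₁ → ℕ and c : Fin n₂ → ℕ be non-increasing integer vectors and r̄ : Fin n₁ → ℕ, c̄ : Fin n₂ → ℕ integer vectors with r̲ ≤ r̄ and c ≤ c̄ componentwise, such that the four-tuple (r̲, r̄, c, c̄) is realizable but (r̲, r̄, c, c) is not realizable. Then there exists a right-most position i with c i < c̄ i. Let j be the left-most position with c j = c i, and define vectors a and ā by: a k = c k + 1 if k = j and a k = c k otherwise; ā j = c̄ i, ā i = c̄ j, and ā k = c̄ k for all k ≠ i, j. Then a is non-increasing, a ≤ ā componentwise, and the four-tuple (r̲,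 r̄, a, ā) is realizable. -/
open Finset

theorem card_comp_swap {n : ℕ} (f : Fin n → Bool) (e : Equiv.Perm (Fin n)) :
    (univ.filter fun k => f (e k) = true).card = (univ.filter fun k => f k = true).card := by
  apply Finset.card_bij (fun a _ => e a)
  · intro a ha; simpa using ha
  · intro a _ b _ h; exact e.injective h
  · intro b hb; exact ⟨e.symm b, by simpa using hb, by simp⟩

theorem realizable_shift {n₁ n₂ : ℕ} (rl ru : Fin n₁ → ℕ) (c d : Fin n₂ → ℕ) (j : Fin n₂)
    (hj : c j < d j) (hk : ∀ k, c k < d k → c j ≤ c k)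
    (hreal : Realizable rl ru c d) (hnot : ¬ Realizable rl ru c c) :
    Realizable rl ru (fun k => if k = j then c k + 1 else c k) d := by
  obtain ⟨M, hU, hV⟩ := hreal
  by_cases hdj : c j < degV M j
  · refine ⟨M, hU, fun k => ⟨?_, (hV k).2⟩⟩
    dsimp only
    split_ifs with h
    · subst h; exact hdj
    · exact (hV k).1
  have hje : degV M j = c j := le_antisymm (not_lt.mp hdj) (hV j).1
  obtain ⟨k, hck⟩ : ∃ k, c k < degV M k := by
    by_contra! h
    exact hnot ⟨M, hU, fun k => ⟨(hV k).1, h k⟩⟩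
  have hjk : k ≠ j := by rintro rfl; exact hdj hck
  have hlt : degV M j < degV M k := by
    have := hk k (hck.trans_le (hV k).2); omega
  obtain ⟨u, hu1, hu2⟩ : ∃ u, M u k = true ∧ M u j = false := by
    by_contra! h
    apply absurd hlt (not_lt.mpr _)
    apply Finset.card_le_card
    intro u hu
    have := h u (by simpa using hu)
    simpa using this
  refine ⟨fun w v => if w = u then M w (Equiv.swap j k v) else M w v, fun w => ?_, fun v => ?_⟩
  · have : degU (fun w v => if w = u then M w (Equiv.swap j k v) else M w v) w = degU M w := by
      unfold degU
      by_cases h : w = u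
      · simp only [h, if_true]
        exact card_comp_swap (M u) _
      · simp only [h, if_false]
    rw [this]; exact hU w
  · dsimp only
    by_cases hvj : v = j
    · subst hvj
      have : degV (fun w v' => if w = u then M w (Equiv.swap v k v') else M w v') v
          = degV M v + 1 := by
        unfold degV
        rw [← Finset.card_insert_of_notMem (a := u) (by simp [hu2])]
        congr 1
        ext w
        by_cases h : w = u <;> simp [h, hu1]
      rw [this, if_pos rfl]; omega
    · rw [if_neg hvj]
      by_cases hvk : v = k
      · subst hvk
        have : degV (fun w v' => if w = u then M w (Equiv.swap j v v') else M w v') v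
            = degV M v - 1 := by
          unfold degV
          rw [← Finset.card_erase_of_mem (a := u) (by simp [hu1])]
          congr 1
          ext w
          by_cases h : w = u <;> simp [h, hu2]
        have := hV v
        omega
      · have : degV (fun w v' => if w = u then M w (Equiv.swap j k v') else M w v') v
            = degV M v := by
          unfold degV
          simp [Equiv.swap_apply_of_ne_of_ne hvj hvk]
        rw [this]; exact hV v

/-- Incrementation lemma (Lemma 3). -/
theorem increment_lemma {n₁ n₂ : ℕ} (rl ru : Fin n₁ → ℕ) (c cu : Fin n₂ → ℕ)
    (hrl : Antitone rl) (hc : Antitone c) (hr : rl ≤ ru) (hcu : c ≤ cu)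
    (hreal : Realizable rl ru c cu) (hnot : ¬ Realizable rl ru c c) :
    ∃ i : Fin n₂, c i < cu i ∧ (∀ k, c k < cu k → k ≤ i) ∧
      ∀ j : Fin n₂, (c j = c i ∧ ∀ k, c k = c i → j ≤ k) →
        Antitone (fun k => if k = j then c k + 1 else c k) ∧
        (fun k => if k = j then c k + 1 else c k) ≤
          (fun k => if k = j then cu i else if k = i then cu j else cu k) ∧
        Realizable rl ru (fun k => if k = j then c k + 1 else c k)
          (fun k => if k = j then cu i else if k = i then cu j else cu k) := by
  have hne : (univ.filter fun k => c k < cu k).Nonempty := by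
    by_contra h
    apply hnot
    have : cu = c := by
      funext k
      refine le_antisymm ?_ (hcu k)
      by_contra hk
      exact h ⟨k, by simpa using hk⟩
    rwa [this] at hreal
  obtain ⟨i, hi, him⟩ := Finset.exists_max_image _ id hne
  have hi : c i < cu i := by simpa using hi
  have him : ∀ k, c k < cu k → k ≤ i := fun k hk => him k (by simpa using hk)
  refine ⟨i, hi, him, ?_⟩
  rintro j ⟨hj, hjm⟩
  refine ⟨?_, ?_, ?_⟩
  · intro x y hxy
    have h1 := hc hxy
    dsimp only
    split_ifs with hy hx hx
    · omega
    · subst hy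
      have : c x ≠ c i := fun h => hx (le_antisymm hxy (hjm x h))
      omega
    · omega
    · omega
  · intro k
    dsimp only
    split_ifs with h1 h2
    · subst h1; omega
    · subst h2; have := hcu j; simp only at this; omega
    · exact hcu k
  · apply realizable_shift
    · simp only [if_true]; omega
    · intro k hk
      have hk' : k ≤ i := by
        split_ifs at hk with h1 h2
        · subst h1; exact hjm i rfl
        · exact h2.le
        · exact him k hk
      have := hc hk'
      omega
    · obtain ⟨M, hU, hV⟩ := hreal
      refine ⟨fun w v => M w (Equiv.swap i j v), fun w => ?_, fun v => ?_⟩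
      · have : degU (fun w v => M w (Equiv.swap i j v)) w = degU M w :=
          card_comp_swap (M w) _
        rw [this]; exact hU w
      · have : degV (fun w v => M w (Equiv.swap i j v)) v = degV M (Equiv.swap i j v) := rfl
        rw [this]
        have h := hV (Equiv.swap i j v)
        dsimp only
        split_ifs with h1 h2
        · subst h1; rw [Equiv.swap_apply_right] at h ⊢; omega
        · subst h2; rw [Equiv.swap_apply_left] at h ⊢; omega
        · rwa [Equiv.swap_apply_of_ne_of_ne h2 h1] at h ⊢
    · exact hnot
end

section
/- Let r̲ : Fin n₁ → ℕ and c̲ : Fin n₂ → ℕ be integer vectors and let c : Fin n₂ → ℕ satisfy c̲ ≤ c componentwise. If the domination S_j(r̲) ≤ S_j(c') holds for every j with 1 ≤ j ≤ n₁ (where c' is the conjugate of c of length n₁), then for every j with 1 ≤ j ≤ n₁ the total sum satisfies S_{n₂}(c) ≥ S_{n₂}(c̲) + S_j(r̲) − S_j(c̲'), where c̲' is the conjugate of c̲ of length n₁. -/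
open Finset

lemma psum_conjVec_eq {n m : ℕ} (x : Fin m → ℕ) (j : ℕ) (hj : j ≤ n) :
    psum (conjVec n x) j = ∑ k, min (x k) j := by
  unfold psum conjVec conj
  simp only [Finset.card_filter]
  rw [Finset.sum_comm]
  refine Finset.sum_congr rfl fun k _ => ?_
  rw [Finset.sum_filter,
    Fin.sum_univ_eq_sum_range (fun i => if i < j then (if i + 1 ≤ x k then 1 else 0) else 0) n,
    ← Finset.sum_filter, ← Finset.card_filter]
  have h : ((Finset.range n).filter (fun i => i < j)).filter (fun i => i + 1 ≤ x k)
      = Finset.range (min (x k) j) := by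
    ext i
    simp only [Finset.mem_filter, Finset.mem_range]
    omega
  rw [h, Finset.card_range]

lemma psum_full {m : ℕ} (x : Fin m → ℕ) : psum x m = ∑ k, x k := by
  unfold psum
  rw [Finset.filter_true_of_mem]
  intro i _
  exact i.isLt

/-- Lower bound on the total sum forced by the domination conditions. -/
theorem total_sum_lower_bound {n₁ n₂ : ℕ} (rl : Fin n₁ → ℕ) (cl c : Fin n₂ → ℕ)
    (hc : cl ≤ c)
    (hdom : ∀ j, 1 ≤ j → j ≤ n₁ → psum rl j ≤ psum (conjVec n₁ c) j) :
    ∀ j, 1 ≤ j → j ≤ n₁ →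
      (psum c n₂ : ℤ) ≥
        (psum cl n₂ : ℤ) + (psum rl j : ℤ) - (psum (conjVec n₁ cl) j : ℤ) := by
  intro j h1 hj
  have hd := hdom j h1 hj
  rw [psum_conjVec_eq c j hj] at hd
  rw [psum_conjVec_eq cl j hj, psum_full, psum_full]
  have key : ∑ k, cl k + ∑ k, min (c k) j ≤ ∑ k, c k + ∑ k, min (cl k) j := by
    rw [← Finset.sum_add_distrib, ← Finset.sum_add_distrib]
    refine Finset.sum_le_sum fun k _ => ?_
    have hk : cl k ≤ c k := hc k
    omega
  omega
end
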